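/- For every β ∈ ℝ, f_β((1+β)/3) = (1/3)(1+β)(β²+β−1)(β²−β+1). Consequently, for β ∈ (−1,1), the number (1+β)/3 is a root of f_β if and only if β = σ; in particular, the unique real root of f_σ is (1+σ)/3, so that as β ↑ σ the clockwise Shapley periodic orbit shrinks to the interior equilibrium. -/

import Mathlib

/-- The cubic governing the clockwise (Shapley) periodic orbit. -/
noncomputable def fShapley (β Z : ℝ) : ℝ :=
  (3*β^2 + 3*β + 3)*Z^3 + (2*β^3 - 2*β^2 - 5*β - 4)*Z^2 + (-β^3 + 4*β + 3)*Z - (1 + β)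

theorem fShapley_interior (β : ℝ) :
    fShapley β ((1 + β)/3) = (1/3)*(1 + β)*(β^2 + β - 1)*(β^2 - β + 1) := by
  unfold fShapley
  ring

theorem goldenMean_pos : 0 < (Real.sqrt 5 - 1)/2 := by
  have : (1 : ℝ) < Real.sqrt 5 := Real.lt_sqrt_of_sq_lt (by norm_num)
  linarith

theorem goldenMean_sq : ((Real.sqrt 5 - 1)/2)^2 + (Real.sqrt 5 - 1)/2 - 1 = 0 := by
  have : Real.sqrt 5 ^ 2 = 5 := Real.sq_sqrt (by norm_num)
  linear_combination this / 4

/-- At a root of `x² + x - 1` the cubic splits off the linear factor `Z - (1 + σ)/3`. -/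
theorem fShapley_factor {σ : ℝ} (hσ : σ^2 + σ - 1 = 0) (Z : ℝ) :
    fShapley σ Z = (Z - (1 + σ)/3) * (3*(2*Z^2 + (σ - 2)*Z + 1)) := by
  unfold fShapley
  linear_combination (3*Z^3 + (2*σ - 4)*Z^2 + (2 - σ)*Z) * hσ

theorem shapley_quadratic_pos {σ : ℝ} (h0 : 0 < σ) (hσ : σ^2 + σ - 1 = 0) (Z : ℝ) :
    0 < 2*Z^2 + (σ - 2)*Z + 1 := by
  nlinarith [sq_nonneg (4*Z + (σ - 2))]

/-- f_β((1+β)/3) = (1/3)(1+β)(β²+β−1)(β²−β+1); for β ∈ (−1,1) the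
number (1+β)/3 is a root of f_β iff β = σ; and the unique real root of f_σ is
(1+σ)/3 (σ = (√5−1)/2 the golden mean). -/
theorem stmt6 :
    (∀ β : ℝ, fShapley β ((1 + β)/3) = (1/3)*(1 + β)*(β^2 + β - 1)*(β^2 - β + 1)) ∧
    (∀ β ∈ Set.Ioo (-1 : ℝ) 1,
      (fShapley β ((1 + β)/3) = 0 ↔ β = (Real.sqrt 5 - 1)/2)) ∧
    (∀ ν : ℝ, fShapley ((Real.sqrt 5 - 1)/2) ν = 0 ↔ ν = (1 + (Real.sqrt 5 - 1)/2)/3) := by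
  refine ⟨fShapley_interior, fun β hβ => ?_, fun ν => ?_⟩
  · have hpos : 0 < (1/3)*(1 + β)*(β^2 - β + 1) :=
      mul_pos (by linarith [hβ.1]) (by nlinarith [sq_nonneg (2*β - 1)])
    have hfactor : fShapley β ((1 + β)/3) =
        (1/3)*(1 + β)*(β^2 - β + 1) *
          ((β - (Real.sqrt 5 - 1)/2) * (β + (Real.sqrt 5 - 1)/2 + 1)) := by
      rw [fShapley_interior]
      linear_combination (1/3)*(1 + β)*(β^2 - β + 1) * goldenMean_sq
    have hsum : 0 < β + (Real.sqrt 5 - 1)/2 + 1 := by linarith [hβ.1, goldenMean_pos]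
    rw [hfactor, mul_eq_zero_iff_left hpos.ne', mul_eq_zero_iff_right hsum.ne', sub_eq_zero]
  · have hquad := shapley_quadratic_pos goldenMean_pos goldenMean_sq ν
    rw [fShapley_factor goldenMean_sq, mul_eq_zero_iff_right (by positivity), sub_eq_zero]
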